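/- arXiv:1309.5588 — 2 statements merged into one kernel-verified Lean document; each statement's English description precedes it below -/
import Mathlib

section
/- Let N be a finite commutative nilsemigroup. Then L(N) ≤ D(N) ≤ L(N) + 1, where L(N) is the nilpotency index of N and D(N) is the Davenport constant of N. -/
namespace EGZ

variable {S : Type}

/-- `rep a n = (n+1)·a`, the (n+1)-fold sum of `a` with itself (defined for semigroups,
where the 0-fold sum is unavailable). -/
def rep [AddCommSemigroup S] (a : S) : ℕ → S
  | 0 => a
  | n + 1 => rep a n + a

/-- The sum of all terms of a sequence (= multiset) over the semigroup `S`, computed in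
`WithZero S` (i.e. `S` with an extra identity element `0` adjoined); the empty sequence
has sum `0`, and a nonempty sequence has sum `↑s` where `s ∈ S` is its genuine sum. -/
def mSum [AddCommSemigroup S] (T : Multiset S) : WithZero S :=
  (T.map (fun s => (s : WithZero S))).sum

/-- `σ(A) = σ(B)`, with the paper's convention: the empty sequence is regarded as having
sum equal to the identity element `e` of `S`, whenever `S` has an identity element. -/
def EqSum [AddCommSemigroup S] (A B : Multiset S) : Prop :=
  mSum A = mSum B ∨
    ∃ e : S, (∀ a : S, e + a = a) ∧
      ((mSum A = 0 ∧ mSum B = (e : WithZero S)) ∨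
        (mSum A = (e : WithZero S) ∧ mSum B = 0))

/-- A sequence `T` over `S` is reducible if some proper subsequence `B` of `T`
satisfies `σ(B) = σ(T)`. -/
def Reducible [AddCommSemigroup S] (T : Multiset S) : Prop :=
  ∃ B : Multiset S, B < T ∧ EqSum B T

/-- The (large) Davenport constant `D(S)`: the smallest `ℓ` such that every sequence over
`S` of length at least `ℓ` is reducible. -/
noncomputable def DavC (S : Type) [AddCommSemigroup S] : ℕ :=
  sInf {ℓ : ℕ | ∀ T : Multiset S, ℓ ≤ Multiset.card T → Reducible T}

/-- The property defining the small Davenport constant: `ℓ` is admissible if for every `m`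
and every `c₁, …, c_m ∈ S` there is `J ⊆ [1, m]` with `|J| ≤ ℓ` and `Σ_{j=1}^m c_j = Σ_{j∈J} c_j`. -/
def SmallDavProp (S : Type) [AddCommSemigroup S] (ℓ : ℕ) : Prop :=
  ∀ (m : ℕ) (c : Fin m → S), ∃ J : Finset (Fin m),
    J.card ≤ ℓ ∧ EqSum (J.val.map c) ((Finset.univ : Finset (Fin m)).val.map c)

/-- The small Davenport constant `d(S)`. -/
noncomputable def smallDavC (S : Type) [AddCommSemigroup S] : ℕ :=
  sInf {ℓ : ℕ | SmallDavProp S ℓ}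

/-- The period of an element `a ∈ S`: the least `t > 0` such that `r·a = (r+t)·a`
for some `r > 0`. -/
noncomputable def period [AddCommSemigroup S] (a : S) : ℕ :=
  sInf {t : ℕ | 0 < t ∧ ∃ k : ℕ, rep a (k + t) = rep a k}

/-- `exp(S)`: the least common multiple of the periods of all elements of `S`. -/
noncomputable def expS (S : Type) [AddCommSemigroup S] [Fintype S] : ℕ :=
  (Finset.univ : Finset S).lcm (fun a => period a)

/-- `κ(S) = ⌈|S| / exp(S)⌉ · exp(S)`. -/
noncomputable def kappa (S : Type) [AddCommSemigroup S] [Fintype S] : ℕ :=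
  ((Fintype.card S + expS S - 1) / expS S) * expS S

/-- `E(S)`: the smallest positive integer `ℓ` such that every sequence `T` over `S` of
length at least `ℓ` contains a subsequence `T'` with `|T| - |T'| = κ(S)` and `σ(T') = σ(T)`. -/
noncomputable def EC (S : Type) [AddCommSemigroup S] [Fintype S] : ℕ :=
  sInf {ℓ : ℕ | 0 < ℓ ∧ ∀ T : Multiset S, ℓ ≤ Multiset.card T →
    ∃ B : Multiset S, B ≤ T ∧ Multiset.card T - Multiset.card B = kappa S ∧ EqSum B T}

end EGZ

/-- A commutative nilsemigroup: a commutative semigroup with a zero element `z`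
(`z + a = z` for all `a`) in which every element `x` is nilpotent, i.e. `n·x = z`
for some `n > 0` (`EGZ.rep x n = (n+1)·x`). -/
def IsNilsemigroup (N : Type) [AddCommSemigroup N] : Prop :=
  ∃ z : N, (∀ a : N, z + a = z) ∧ ∀ x : N, ∃ n : ℕ, EGZ.rep x n = z

/-- The `t`-fold sumset `N + ⋯ + N` of a commutative semigroup `N`:
all sums of sequences of exactly `t` elements of `N`. -/
def tFold (N : Type) [AddCommSemigroup N] (t : ℕ) : Set N :=
  {s : N | ∃ T : Multiset N, Multiset.card T = t ∧ EGZ.mSum T = (s : WithZero N)}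

/-- The nilpotency index `L(N)`: the least `t > 0` such that the `t`-fold sumset
`N + ⋯ + N` has exactly one element. -/
noncomputable def nilIndex (N : Type) [AddCommSemigroup N] : ℕ :=
  sInf {t : ℕ | 0 < t ∧ ∃ a : N, tFold N t = {a}}

/-!
A finite commutative nilsemigroup is nilpotent: a long enough sequence repeats some term `x` so
often that the copies of `x` alone sum to the zero element `∞`. An equality `s + c = s` forces
`s = s + nc = s + ∞ = ∞` for a suitable `n`, so a sequence with a sum other than `∞` is irreducible:
if all sequences of length at least `ℓ` are reducible, they all sum to `∞`, whence `L(N) ≤ D(N)`.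
Conversely, if all sequences of length at least `t` sum to `∞`, then removing any term from a
sequence of length at least `t + 1` keeps its sum, whence `D(N) ≤ L(N) + 1`.
-/

namespace EGZ

theorem exists_le_card_eq {α : Type*} {t : ℕ} {T : Multiset α} (hT : t ≤ Multiset.card T) :
    ∃ A ≤ T, Multiset.card A = t := by
  obtain ⟨A, hA⟩ : ∃ A, A ∈ Multiset.powersetCard t T := by
    rw [← Multiset.card_pos_iff_exists_mem, Multiset.card_powersetCard]
    exact Nat.choose_pos hT
  exact ⟨A, Multiset.mem_powersetCard.1 hA⟩

section Sums

variable {S : Type} [AddCommSemigroup S]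

@[simp]
theorem mSum_zero : mSum (0 : Multiset S) = 0 := rfl

@[simp]
theorem mSum_singleton (a : S) : mSum {a} = (a : WithZero S) := by
  simp [mSum]

theorem mSum_add (A B : Multiset S) : mSum (A + B) = mSum A + mSum B := by
  simp [mSum]

theorem mSum_cons (a : S) (T : Multiset S) : mSum (a ::ₘ T) = a + mSum T := by
  simp [mSum]

theorem exists_mSum_eq_coe {T : Multiset S} (hT : T ≠ 0) : ∃ s : S, mSum T = s := by
  induction T using Multiset.induction_on with
  | empty => exact absurd rfl hT
  | cons a T ih =>
    obtain rfl | hT' := eq_or_ne T 0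
    · exact ⟨a, mSum_singleton a⟩
    · obtain ⟨s, hs⟩ := ih hT'
      exact ⟨a + s, by rw [mSum_cons, hs, WithZero.coe_add]⟩

theorem coe_rep (a : S) (n : ℕ) :
    ((rep a n : S) : WithZero S) = mSum (Multiset.replicate (n + 1) a) := by
  induction n with
  | zero => simp [rep]
  | succ n ih =>
    rw [rep, WithZero.coe_add, ih, add_comm, ← mSum_cons, ← Multiset.replicate_succ]

theorem add_rep_eq_self {s c : S} (h : s + c = s) (n : ℕ) : s + rep c n = s := by
  induction n with
  | zero => exact h
  | succ n ih => rw [rep, ← add_assoc, ih, h]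

theorem exists_add_eq_self_of_reducible {T : Multiset S} (hT : Reducible T) :
    ∃ s c : S, mSum T = s ∧ s + c = s := by
  obtain ⟨B, hBT, hsum⟩ := hT
  obtain ⟨s, hs⟩ := exists_mSum_eq_coe (ne_bot_of_gt hBT)
  rcases hsum with hsum | ⟨e, he, ⟨-, hTe⟩ | ⟨-, hT0⟩⟩
  · obtain ⟨C, rfl⟩ := Multiset.le_iff_exists_add.1 hBT.le
    obtain ⟨c, hc⟩ := exists_mSum_eq_coe (T := C) (by rintro rfl; simp at hBT)
    refine ⟨s, c, hs, WithZero.coe_inj.1 ?_⟩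
    calc ((s + c : S) : WithZero S) = mSum B + mSum C := by rw [WithZero.coe_add, hsum, hs, hc]
      _ = s := by rw [← mSum_add, hs]
  · exact ⟨e, e, hTe, he e⟩
  · exact absurd (hs.symm.trans hT0) WithZero.coe_ne_zero

end Sums

section Absorbing

variable {S : Type} [AddCommSemigroup S] {z : S}

/-- `z` is the zero element `∞` of the semigroup, written additively. It is unrelated to the element
`0` of `WithZero S`, which is an identity. -/
def IsAbsorbing (z : S) : Prop :=
  ∀ a : S, z + a = z

/-- All sequences of length at least `t` have sum `z`. For `z` the zero element, the least such `t`
is the nilpotency index; `t = 0` is impossible, as the sum of the empty sequence is not in `S`. -/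
def LongSumsEq (z : S) (t : ℕ) : Prop :=
  ∀ T : Multiset S, t ≤ Multiset.card T → mSum T = z

theorem IsAbsorbing.coe_add (hz : IsAbsorbing z) (w : WithZero S) : (z : WithZero S) + w = z := by
  induction w using WithZero.recZeroCoe with
  | zero => exact add_zero _
  | coe a => rw [← WithZero.coe_add, hz]

theorem IsAbsorbing.mSum_eq_of_le (hz : IsAbsorbing z) {A B : Multiset S} (hAB : A ≤ B)
    (hA : mSum A = z) : mSum B = z := by
  obtain ⟨C, rfl⟩ := Multiset.le_iff_exists_add.1 hAB
  rw [mSum_add, hA, hz.coe_add]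

theorem IsAbsorbing.eq_of_add_eq_self (hz : IsAbsorbing z) {s c : S} {n : ℕ} (hc : rep c n = z)
    (h : s + c = s) : s = z := by
  rw [← add_rep_eq_self h n, hc, add_comm, hz]

theorem IsAbsorbing.mSum_eq_of_reducible (hz : IsAbsorbing z) (hnil : ∀ x : S, ∃ n, rep x n = z)
    {T : Multiset S} (hT : Reducible T) : mSum T = z := by
  obtain ⟨s, c, hs, hsc⟩ := exists_add_eq_self_of_reducible hT
  obtain ⟨n, hn⟩ := hnil c
  rw [hs, hz.eq_of_add_eq_self hn hsc]

theorem LongSumsEq.reducible {t : ℕ} (h : LongSumsEq z t) {T : Multiset S}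
    (hT : t + 1 ≤ Multiset.card T) : Reducible T := by
  classical
  obtain ⟨x, hx⟩ := Multiset.card_pos_iff_exists_mem.1 (Nat.zero_lt_of_lt hT)
  have hcard : t ≤ Multiset.card (T.erase x) := by
    rw [Multiset.card_erase_of_mem hx]
    exact Nat.le_pred_of_lt hT
  refine ⟨T.erase x, Multiset.erase_lt.2 hx, Or.inl ?_⟩
  rw [h _ hcard, h T (Nat.le_of_succ_le hT)]

theorem LongSumsEq.rep_eq {t : ℕ} (h : LongSumsEq z t) (x : S) : rep x t = z := by
  rw [← WithZero.coe_inj, coe_rep]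
  exact h _ (by simp)

theorem IsAbsorbing.exists_longSumsEq [Finite S] (hz : IsAbsorbing z)
    (hnil : ∀ x : S, ∃ n, rep x n = z) : ∃ t, LongSumsEq z t := by
  classical
  cases nonempty_fintype S
  choose f hf using hnil
  refine ⟨∑ x, f x + 1, fun T hT => ?_⟩
  obtain ⟨x, -, hx⟩ : ∃ x ∈ Finset.univ, f x < T.count x := by
    apply Finset.exists_lt_of_sum_lt
    rwa [Multiset.sum_count_eq_card fun a _ => Finset.mem_univ a]
  refine hz.mSum_eq_of_le (Multiset.le_count_iff_replicate_le.1 hx) ?_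
  rw [← coe_rep, hf]

end Absorbing

section NilpotencyIndex

variable {N : Type} [AddCommSemigroup N] {z : N} {t : ℕ}

/-- Nilpotency of a commutative semigroup `N`, finite or not: some `t`-fold sumset `N + ⋯ + N` with
`t > 0` has exactly one element. It says that the set whose infimum is `nilIndex N` is nonempty. -/
def IsNilpotentSemigroup (N : Type) [AddCommSemigroup N] : Prop :=
  ∃ t : ℕ, 0 < t ∧ ∃ a : N, tFold N t = {a}

theorem isAbsorbing_of_tFold_eq_singleton (ht : 0 < t) (h : tFold N t = {z}) : IsAbsorbing z := by
  intro x
  obtain ⟨T, hT, hsum⟩ : z ∈ tFold N t := h ▸ rfl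
  obtain ⟨y, hy⟩ := Multiset.card_pos_iff_exists_mem.1 (hT ▸ ht)
  obtain ⟨U, rfl⟩ := Multiset.exists_cons_of_mem hy
  have hmem : z + x ∈ tFold N t := by
    refine ⟨(y + x) ::ₘ U, by simpa using hT, ?_⟩
    rw [WithZero.coe_add, ← hsum, mSum_cons, mSum_cons, WithZero.coe_add, add_right_comm]
  rwa [h] at hmem

theorem IsAbsorbing.longSumsEq_iff (hz : IsAbsorbing z) :
    LongSumsEq z t ↔ 0 < t ∧ tFold N t = {z} := by
  refine ⟨fun h => ?_, fun ⟨ht, h⟩ T hT => ?_⟩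
  · have ht : 0 < t := by
      by_contra! ht
      exact WithZero.coe_ne_zero (h 0 (by simpa using ht)).symm
    refine ⟨ht, Set.eq_singleton_iff_unique_mem.2 ⟨?_, ?_⟩⟩
    · exact ⟨Multiset.replicate t z, by simp, h _ (by simp)⟩
    · rintro s ⟨T, hT, hs⟩
      exact WithZero.coe_inj.1 (hs.symm.trans (h T hT.ge))
  · obtain ⟨A, hAT, hA⟩ := exists_le_card_eq hT
    obtain ⟨s, hs⟩ := exists_mSum_eq_coe (Multiset.card_pos.1 (hA ▸ ht))
    have hsz : s ∈ tFold N t := ⟨A, hA, hs⟩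
    rw [h, Set.mem_singleton_iff] at hsz
    exact hz.mSum_eq_of_le hAT (hsz ▸ hs)

theorem IsAbsorbing.eq (hz : IsAbsorbing z) {w : N} (hw : IsAbsorbing w) : z = w := by
  rw [← hz w, add_comm, hw]

theorem IsAbsorbing.nilIndex_eq (hz : IsAbsorbing z) : nilIndex N = sInf {t | LongSumsEq z t} := by
  refine congrArg sInf (Set.ext fun t => ⟨?_, fun h => ?_⟩)
  · rintro ⟨ht, a, ha⟩
    obtain rfl := hz.eq (isAbsorbing_of_tFold_eq_singleton ht ha)
    exact hz.longSumsEq_iff.2 ⟨ht, ha⟩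
  · obtain ⟨ht, h⟩ := hz.longSumsEq_iff.1 h
    exact ⟨ht, z, h⟩

theorem IsNilpotentSemigroup.exists_isAbsorbing_longSumsEq (hN : IsNilpotentSemigroup N) :
    ∃ z : N, IsAbsorbing z ∧ ∃ t, LongSumsEq z t := by
  obtain ⟨t, ht, z, h⟩ := hN
  have hz := isAbsorbing_of_tFold_eq_singleton ht h
  exact ⟨z, hz, t, hz.longSumsEq_iff.2 ⟨ht, h⟩⟩

theorem isNilpotentSemigroup_of_finite [Finite N] (hnil : IsNilsemigroup N) :
    IsNilpotentSemigroup N := by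
  obtain ⟨z, hz : IsAbsorbing z, hrep⟩ := hnil
  obtain ⟨t, h⟩ := hz.exists_longSumsEq hrep
  obtain ⟨ht, h⟩ := hz.longSumsEq_iff.1 h
  exact ⟨t, ht, z, h⟩

end NilpotencyIndex

end EGZ

theorem nilIndex_le_davenport_le_general (N : Type) [AddCommSemigroup N]
    (hN : EGZ.IsNilpotentSemigroup N) :
    nilIndex N ≤ EGZ.DavC N ∧ EGZ.DavC N ≤ nilIndex N + 1 := by
  obtain ⟨z, hz, hlong⟩ := hN.exists_isAbsorbing_longSumsEq
  have hL : EGZ.LongSumsEq z (nilIndex N) := hz.nilIndex_eq ▸ Nat.sInf_mem hlong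
  have hreducible : ∀ T : Multiset N, nilIndex N + 1 ≤ Multiset.card T → EGZ.Reducible T :=
    fun _ hT => hL.reducible hT
  have hD : ∀ T : Multiset N, EGZ.DavC N ≤ Multiset.card T → EGZ.Reducible T :=
    Nat.sInf_mem (s := {ℓ | ∀ T : Multiset N, ℓ ≤ Multiset.card T → EGZ.Reducible T})
      ⟨_, hreducible⟩
  have hDlong : EGZ.LongSumsEq z (EGZ.DavC N) := fun T hT =>
    hz.mSum_eq_of_reducible (fun x => ⟨_, hL.rep_eq x⟩) (hD T hT)
  exact ⟨hz.nilIndex_eq.trans_le (Nat.sInf_le hDlong), Nat.sInf_le hreducible⟩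

/-- For a finite commutative nilsemigroup `N`, `L(N) ≤ D(N) ≤ L(N) + 1`. -/
theorem nilIndex_le_davenport_le (N : Type) [AddCommSemigroup N] [Fintype N]
    (hnil : IsNilsemigroup N) :
    nilIndex N ≤ EGZ.DavC N ∧ EGZ.DavC N ≤ nilIndex N + 1 :=
  nilIndex_le_davenport_le_general N (EGZ.isNilpotentSemigroup_of_finite hnil)
end

section
/- Let S = G ∪ N be a finite elementary semigroup (disjoint union of an abelian group G and a nilsemigroup N, where N is an ideal of S, the zero of N is the zero of S, and the identity of G is the identity of S). Then E(S) ≤ D(S) + κ(S) − 1. -/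
/-- A finite commutative semigroup `S` is elementary with respect to subsets `G` and `N`:
`S` is the disjoint union of `G` and `N`; `G` is (under the addition of `S`) an abelian
group whose identity element is an identity element of all of `S`; `N` is an ideal of `S`
and is a nilsemigroup whose zero element `z` is a zero element of all of `S`. -/
def IsElementary (S : Type) [AddCommSemigroup S] (G N : Set S) : Prop :=
  (∀ x : S, x ∈ G ∨ x ∈ N) ∧ Disjoint G N ∧
  (∀ a ∈ G, ∀ b ∈ G, a + b ∈ G) ∧
  (∃ e ∈ G, (∀ a : S, e + a = a) ∧ ∀ a ∈ G, ∃ b ∈ G, a + b = e) ∧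
  (∀ a ∈ N, ∀ s : S, a + s ∈ N) ∧
  (∃ z ∈ N, (∀ a : S, z + a = z) ∧ ∀ x ∈ N, ∃ n : ℕ, EGZ.rep x n = z)

/-!
`S` is a commutative monoid with a zero `z` in which every element is a unit or has a multiple equal
to `z`. Let `T` be long and write `T = U + N`, where `U` consists of the terms that are units. If
`σ(T) = z`, a minimal subsequence with sum `z` has fewer than `D(S)` terms, and its sum does not
change when further terms of `T` are added to it. Otherwise let `H` be the stabilizer of `σ(N)` in
the unit group. Only units can fix `σ(N) ≠ z`, so every zero-sum free sequence over the quotient by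
`H` lifts to a sequence of units that stays irreducible after appending `N`. Hence zero-sum free
sequences over the quotient have at most `D(S) - 1 - |N|` terms, and Gao's theorem for the quotient
yields `κ(S)` terms of `U` whose sum lies in `H`; deleting them from `T` does not change `σ(T)`.

For Gao's theorem itself, translate a most frequent term to `0` and let `h` be its multiplicity.
By Scherk's theorem on sumsets, a long sequence of nonzero terms with multiplicities at most `h` has
a nonempty zero-sum subsequence of length at most `h`. Removing such pieces trims a large zero-sum
subsequence to a length between `κ - h` and `κ`, and the missing terms are filled up with zeros.
-/

namespace EGZ

open Multiset
open scoped Pointwise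

section Multiset

variable {α β : Type*}

theorem exists_le_map_eq {f : α → β} {T : Multiset α} {B : Multiset β} (hB : B ≤ T.map f) :
    ∃ A ≤ T, A.map f = B := by
  induction T using Quotient.inductionOn with
  | _ l =>
    induction B using Quotient.inductionOn with
    | _ b =>
      obtain ⟨b', hperm, hsub⟩ : (b : List β).Subperm (l.map f) := hB
      obtain ⟨a, ha, rfl⟩ := List.sublist_map_iff.mp hsub
      exact ⟨a, coe_le.mpr ha.subperm, coe_eq_coe.mpr hperm⟩

theorem exists_between_card_eq {B T : Multiset α} (hBT : B ≤ T) {k : ℕ} (hBk : card B ≤ k)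
    (hkT : k ≤ card T) : ∃ C, B ≤ C ∧ C ≤ T ∧ card C = k := by
  obtain ⟨R, rfl⟩ := Multiset.le_iff_exists_add.mp hBT
  rw [card_add] at hkT
  obtain ⟨P, hP⟩ : ∃ P, P ∈ powersetCard (k - card B) R := card_pos_iff_exists_mem.mp <| by
    rw [card_powersetCard]
    exact Nat.choose_pos (by omega)
  obtain ⟨hPR, hPcard⟩ := mem_powersetCard.mp hP
  exact ⟨B + P, Multiset.le_add_right B P, by gcongr, by rw [card_add, hPcard]; omega⟩

theorem cons_le_of_le_sub_dedup [DecidableEq α] {T W : Multiset α} (hW : W ≤ T - T.dedup) {b : α}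
    (hb : b ∈ T) : b ::ₘ W ≤ T :=
  calc
    b ::ₘ W = W + {b} := by rw [← singleton_add, add_comm]
    _ ≤ (T - T.dedup) + T.dedup := add_le_add hW (by simpa using hb)
    _ = T := tsub_add_cancel_of_le (dedup_le T)

end Multiset

section SumIrreducible

variable {M K : Type*} [AddCommMonoid M] [AddCommGroup K]

/-- A sequence over a commutative monoid is sum-irreducible if no proper subsequence has the same
sum. This is the negation of `Reducible`, phrased with `Multiset.sum` instead of `EqSum` so as to
make sense in every universe; over a group it means that `T` is zero-sum free. -/
def SumIrreducible (T : Multiset M) : Prop :=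
  ∀ B ≤ T, B.sum = T.sum → B = T

theorem sumIrreducible_zero : SumIrreducible (0 : Multiset M) :=
  fun _ hB _ => nonpos_iff_eq_zero.mp hB

theorem exists_sumIrreducible_le (T : Multiset M) :
    ∃ B ≤ T, B.sum = T.sum ∧ SumIrreducible B := by
  obtain ⟨B, hBT, hB⟩ :=
    exists_minimal_le_of_wellFoundedLT (fun B : Multiset M => B.sum = T.sum) T rfl
  exact ⟨B, hBT, hB.prop, fun C hC hsum => hB.eq_of_le (hsum.trans hB.prop) hC⟩

theorem SumIrreducible.card_lt_natCard [Finite M] {T : Multiset M} (hT : SumIrreducible T) :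
    card T < Nat.card M := by
  induction T using Quotient.inductionOn with
  | _ l =>
    let prefixSum : Fin (l.length + 1) → M := fun i => (l.take i).sum
    have hinj : Function.Injective prefixSum := by
      refine Function.Injective.of_lt_imp_ne fun i j hij heq => ?_
      have hsub : (l.take i ++ l.drop j).Sublist l := by
        simpa using (List.take_sublist_take_left (l := l) hij.le).append (.refl (l.drop j))
      have hsum : (l.take i ++ l.drop j).sum = l.sum := by
        rw [List.sum_append, ← List.sum_take_add_sum_drop l j]
        exact congrArg (· + (l.drop j).sum) heq
      have hcard := congrArg card
        (hT (l.take i ++ l.drop j : List M) (coe_le.mpr hsub.subperm) (by simpa using hsum))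
      simp only [quot_mk_to_coe, coe_card, List.length_append, List.length_take,
        List.length_drop] at hcard
      omega
    simpa using Nat.card_le_card_of_injective prefixSum hinj

theorem exists_sum_eq_zero_card_le_add {d : ℕ}
    (hd : ∀ V : Multiset K, SumIrreducible V → card V ≤ d) (T : Multiset K) :
    ∃ W ≤ T, W.sum = 0 ∧ card T ≤ card W + d := by
  obtain ⟨R, hRT, hsum, hR⟩ := exists_sumIrreducible_le T
  obtain ⟨W, rfl⟩ := Multiset.le_iff_exists_add.mp hRT
  rw [sum_add, left_eq_add] at hsum
  exact ⟨W, Multiset.le_add_left W R, hsum, by rw [card_add, add_comm]; gcongr; exact hd R hR⟩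

end SumIrreducible

section Scherk

variable {K : Type*} [AddCommGroup K] [DecidableEq K]

/- Scherk's theorem. If `A + B ⊈ A`, Dyson's e-transform at some `a ∈ A` with `a + B ⊈ A` shrinks
`B`, keeps `|A| + |B|` and the unique representation of `0`, and does not enlarge `A + B`. -/
theorem card_add_card_le_card_add_add_one {A B : Finset K} (hA : 0 ∈ A) (hB : 0 ∈ B)
    (huniq : ∀ a ∈ A, ∀ b ∈ B, a + b = 0 → a = 0 ∧ b = 0) :
    A.card + B.card ≤ (A + B).card + 1 := by
  induction B using Finset.strongInduction generalizing A with
  | H B ih =>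
    by_cases hAB : A + B ⊆ A
    · have hB0 : B = {0} := by
        refine Finset.eq_singleton_iff_unique_mem.mpr ⟨hB, fun b hb => ?_⟩
        have hbA : b +ᵥ A = A := Finset.eq_of_subset_of_card_le
          (fun x hx => by
            obtain ⟨a, ha, rfl⟩ := Finset.mem_vadd_finset.mp hx
            rw [vadd_eq_add, add_comm]
            exact hAB (Finset.add_mem_add ha hb))
          (Finset.card_vadd_finset b A).ge
        obtain ⟨a, ha, hab⟩ := Finset.mem_vadd_finset.mp (hbA.symm ▸ hA)
        exact (huniq a ha b hb (by rwa [add_comm])).2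
      simp [hB0]
    · obtain ⟨a, ha, b, hb, hab⟩ : ∃ a ∈ A, ∃ b ∈ B, a + b ∉ A := by
        simpa [Finset.add_subset_iff] using hAB
      have hsub := Finset.addDysonETransform.subset a (A, B)
      have hcard := Finset.addDysonETransform.card a (A, B)
      simp only [Finset.addDysonETransform_fst, Finset.addDysonETransform_snd] at hsub hcard
      have mem_right {y : K} : y ∈ B ∩ (-a +ᵥ A) ↔ y ∈ B ∧ a + y ∈ A := by
        rw [Finset.mem_inter, Finset.mem_neg_vadd_finset_iff, vadd_eq_add]
      have hstep := ih (B ∩ (-a +ᵥ A)) (A := A ∪ (a +ᵥ B))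
        (Finset.ssubset_iff_of_subset Finset.inter_subset_left |>.mpr
          ⟨b, hb, fun h => hab (mem_right.mp h).2⟩)
        (Finset.mem_union_left _ hA) (mem_right.mpr ⟨hB, by rwa [add_zero]⟩) <| by
          intro x hx y hy hxy
          obtain ⟨hyB, hayA⟩ := mem_right.mp hy
          rcases Finset.mem_union.mp hx with hxA | hxB
          · exact huniq x hxA y hyB hxy
          · obtain ⟨c, hc, rfl⟩ := Finset.mem_vadd_finset.mp hxB
            rw [vadd_eq_add] at hxy ⊢
            obtain ⟨hay, rfl⟩ := huniq (a + y) hayA c hc (by rw [← hxy]; abel)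
            obtain ⟨rfl, rfl⟩ := huniq a ha y hyB hay
            simp
      have hle := Finset.card_le_card hsub
      omega

/-- The set of sums of the subsequences of `T` of length at most `h`, the empty one included. -/
def shortSums (h : ℕ) (T : Multiset K) : Finset K :=
  ((T.powerset.filter (card · ≤ h)).map sum).toFinset

theorem mem_shortSums {h : ℕ} {T : Multiset K} {x : K} :
    x ∈ shortSums h T ↔ ∃ W ≤ T, card W ≤ h ∧ W.sum = x := by
  simp [shortSums, and_assoc]

theorem zero_mem_shortSums (h : ℕ) (T : Multiset K) : 0 ∈ shortSums h T :=
  mem_shortSums.mpr ⟨0, Multiset.zero_le T, by simp, sum_zero⟩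

theorem shortSums_sub_dedup_add_subset (h : ℕ) (T : Multiset K) :
    shortSums h (T - T.dedup) + insert 0 T.toFinset ⊆ shortSums (h + 1) T := by
  refine Finset.add_subset_iff.mpr fun a ha b hb => mem_shortSums.mpr ?_
  obtain ⟨W, hW, hWh, rfl⟩ := mem_shortSums.mp ha
  rcases Finset.mem_insert.mp hb with rfl | hbT
  · exact ⟨W, hW.trans tsub_le_self, by omega, (add_zero _).symm⟩
  · exact ⟨b ::ₘ W, cons_le_of_le_sub_dedup hW (mem_toFinset.mp hbT), by simpa using hWh,
      by rw [sum_cons, add_comm]⟩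

/- Split off one copy of every distinct term: these form a set, to which Scherk's theorem applies,
and the multiplicities of the remaining terms drop by one. -/
theorem card_lt_card_shortSums {h : ℕ} {T : Multiset K} (hT : 0 ∉ T) (hcount : ∀ x, T.count x ≤ h)
    (hzero : ∀ W ≤ T, card W ≤ h → W.sum = 0 → W = 0) : card T < (shortSums h T).card := by
  induction h generalizing T with
  | zero =>
    have hT0 : T = 0 := by ext x; simpa using hcount x
    rw [hT0, card_zero]
    exact Finset.card_pos.mpr ⟨0, zero_mem_shortSums 0 0⟩
  | succ h ih =>
    have hrest : card (T - T.dedup) < (shortSums h (T - T.dedup)).card :=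
      ih (fun hmem => hT (mem_of_le tsub_le_self hmem))
        (fun x => by
          have := hcount x
          rw [count_sub, count_dedup]
          split_ifs with hx
          · omega
          · rw [count_eq_zero_of_notMem hx]
            omega)
        (fun W hW hWh => hzero W (hW.trans tsub_le_self) (by omega))
    have hscherk := card_add_card_le_card_add_add_one (B := insert 0 T.toFinset)
      (zero_mem_shortSums h (T - T.dedup)) (Finset.mem_insert_self 0 _) <| by
        intro a ha b hb hab
        rcases Finset.mem_insert.mp hb with rfl | hbT
        · exact ⟨by simpa using hab, rfl⟩
        · obtain ⟨W, hW, hWh, rfl⟩ := mem_shortSums.mp ha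
          have hcons := hzero (b ::ₘ W) (cons_le_of_le_sub_dedup hW (mem_toFinset.mp hbT))
            (by simpa using hWh) (by rw [sum_cons, add_comm, hab])
          exact absurd hcons (cons_ne_zero (a := b) (m := W))
    rw [Finset.card_insert_of_notMem (by simpa using hT), card_toFinset] at hscherk
    have hle := Finset.card_le_card (shortSums_sub_dedup_add_subset h T)
    have hcard := card_sub (dedup_le T)
    omega

theorem exists_short_zero_sum [Finite K] {h : ℕ} {T : Multiset K} (hT : 0 ∉ T)
    (hcount : ∀ x, T.count x ≤ h) (hcard : Nat.card K ≤ card T) :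
    ∃ W ≤ T, card W ≤ h ∧ W.sum = 0 ∧ W ≠ 0 := by
  by_contra! hzero
  have hlt := card_lt_card_shortSums hT hcount hzero
  have := Fintype.ofFinite K
  have hle := (shortSums h T).card_le_univ
  rw [← Nat.card_eq_fintype_card] at hle
  omega

end Scherk

section Gao

variable {K : Type*} [AddCommGroup K] [Finite K] {d κ : ℕ}

theorem exists_zero_sum_le_of_le_card_add [DecidableEq K] {h : ℕ} (hκ : Nat.card K ≤ κ)
    {T : Multiset K} (hT : 0 ∉ T) (hcount : ∀ x, T.count x ≤ h) (hsum : T.sum = 0)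
    (hcard : κ ≤ card T + h) : ∃ W ≤ T, W.sum = 0 ∧ card W ≤ κ ∧ κ ≤ card W + h := by
  obtain ⟨W, hWT, hW⟩ := exists_minimal_le_of_wellFoundedLT
    (fun W : Multiset K => W.sum = 0 ∧ κ ≤ card W + h) T ⟨hsum, hcard⟩
  refine ⟨W, hWT, hW.prop.1, not_lt.mp fun hlt => ?_, hW.prop.2⟩
  obtain ⟨V, hV, hVh, hVsum, hV0⟩ := exists_short_zero_sum (fun hmem => hT (mem_of_le hWT hmem))
    (fun x => (count_le_of_le x hWT).trans (hcount x)) (hκ.trans hlt.le)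
  obtain ⟨R, rfl⟩ := Multiset.le_iff_exists_add.mp hV
  rw [card_add] at hlt
  have hR : R = V + R := hW.eq_of_le
    ⟨by simpa [hVsum] using hW.prop.1, by omega⟩ (Multiset.le_add_left R V)
  exact hV0 (left_eq_add.mp (by rwa [add_comm] at hR))

theorem exists_le_card_eq_sum_eq_zero_of_count_le [DecidableEq K]
    (hd : ∀ V : Multiset K, SumIrreducible V → card V ≤ d) (hκ : Nat.card K ≤ κ) {T : Multiset K}
    (hcount : ∀ x, T.count x ≤ T.count 0) (hT : κ + d ≤ card T) :
    ∃ B ≤ T, card B = κ ∧ B.sum = 0 := by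
  have hsplit : T.filter (· ≠ 0) + replicate (T.count 0) 0 = T := by
    rw [← filter_eq', add_comm, filter_add_not]
  have hcard := congrArg card hsplit
  rw [card_add, card_replicate] at hcard
  obtain ⟨W, hW, hWsum, hWcard⟩ := exists_sum_eq_zero_card_le_add hd (T.filter (· ≠ 0))
  obtain ⟨V, hVW, hVsum, hVκ, hκV⟩ := exists_zero_sum_le_of_le_card_add (h := T.count 0) hκ
    (fun hmem => (mem_filter.mp (mem_of_le hW hmem)).2 rfl)
    (fun x => (count_le_of_le x (hW.trans (filter_le _ T))).trans (hcount x)) hWsum (by omega)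
  refine ⟨V + replicate (κ - card V) 0, ?_, ?_, by simp [hVsum]⟩
  · calc
      V + replicate (κ - card V) 0 ≤ T.filter (· ≠ 0) + replicate (T.count 0) 0 := by
        gcongr
        · exact hVW.trans hW
        · omega
      _ = T := hsplit
  · rw [card_add, card_replicate]
    omega

/- Gao's theorem. Since `κ` kills `K`, translating all terms does not affect whether a subsequence
of length `κ` has sum zero, so `0` may be assumed to be a most frequent term. -/
theorem exists_le_card_eq_sum_eq_zero
    (hd : ∀ V : Multiset K, SumIrreducible V → card V ≤ d) (hκ : Nat.card K ≤ κ)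
    (hexp : AddMonoid.exponent K ∣ κ) {T : Multiset K} (hT : κ + d ≤ card T) :
    ∃ B ≤ T, card B = κ ∧ B.sum = 0 := by
  classical
  obtain ⟨g, hg⟩ := Finite.exists_max (T.count ·)
  have hcount (x : K) : (T.map (· - g)).count x = T.count (x + g) := by
    simpa using count_map_eq_count' (· - g) T sub_left_injective (x + g)
  obtain ⟨B, hB, hBcard, hBsum⟩ :=
    exists_le_card_eq_sum_eq_zero_of_count_le hd hκ (T := T.map (· - g))
      (fun x => by simpa [hcount] using hg (x + g)) (by rwa [card_map])
  obtain ⟨A, hA, rfl⟩ := exists_le_map_eq hB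
  rw [card_map] at hBcard
  refine ⟨A, hA, hBcard, ?_⟩
  simpa [sum_map_sub, hBcard, AddMonoid.exponent_dvd_iff_forall_nsmul_eq_zero.mp hexp g] using hBsum

end Gao

section Units

variable {M : Type*} [AddCommMonoid M]

theorem sum_map_addUnits_val (U : Multiset (AddUnits M)) :
    (U.map AddUnits.val).sum = (U.sum : AddUnits M) :=
  (map_multiset_sum (AddUnits.coeHom M) U).symm

theorem isAddUnit_of_isAddUnit_sum {R : Multiset M} (hR : IsAddUnit R.sum) {x : M} (hx : x ∈ R) :
    IsAddUnit x := by
  obtain ⟨R', rfl⟩ := exists_cons_of_mem hx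
  exact isAddUnit_of_add_isAddUnit_left (sum_cons x R' ▸ hR)

theorem exists_eq_map_addUnits_val_add (T : Multiset M) :
    ∃ (U : Multiset (AddUnits M)) (N : Multiset M),
      (∀ x ∈ N, ¬IsAddUnit x) ∧ T = U.map AddUnits.val + N := by
  classical
  obtain ⟨U, hU⟩ : ∃ U : Multiset (AddUnits M), U.map AddUnits.val = T.filter IsAddUnit :=
    CanLift.prf (T.filter IsAddUnit) fun x hx => (mem_filter.mp hx).2
  exact ⟨U, T.filter (¬IsAddUnit ·), fun x hx => (mem_filter.mp hx).2,
    by rw [hU, filter_add_not]⟩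

theorem le_of_forall_isAddUnit_of_le_add {N R V : Multiset M} (hN : ∀ x ∈ N, ¬IsAddUnit x)
    (hR : ∀ x ∈ R, IsAddUnit x) (hle : R ≤ V + N) : R ≤ V := by
  classical
  calc
    R ≤ (V + N).filter IsAddUnit := le_filter.mpr ⟨hle, hR⟩
    _ = V.filter IsAddUnit := by rw [filter_add, filter_eq_nil.mpr hN, add_zero]
    _ ≤ V := filter_le _ V

theorem isAddUnit_of_add_eq_left {z : M} (hz : ∀ a, z + a = z)
    (hnil : ∀ x : M, IsAddUnit x ∨ ∃ n : ℕ, n • x = z) {a x : M} (ha : a ≠ z) (hax : a + x = a) :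
    IsAddUnit x := by
  refine (hnil x).resolve_right ?_
  rintro ⟨n, hn⟩
  have habsorb (m : ℕ) : a + m • x = a := by
    induction m with
    | zero => simp
    | succ m ih => rw [succ_nsmul, ← add_assoc, ih, hax]
  exact ha (by rw [← habsorb n, hn, add_comm, hz])

end Units

section Stabilizer

variable {M : Type*} [AddCommMonoid M] {U : Multiset (AddUnits M)} {N : Multiset M}

theorem mem_stabilizer_addUnits {a : M} {u : AddUnits M} :
    u ∈ AddAction.stabilizer (AddUnits M) a ↔ a + u = a := by
  rw [AddAction.mem_stabilizer_iff, AddUnits.vadd_def, vadd_eq_add, add_comm]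

theorem sum_map_mk_eq_zero_iff (H : AddSubgroup (AddUnits M)) :
    (U.map (QuotientAddGroup.mk' H)).sum = 0 ↔ U.sum ∈ H := by
  rw [← map_multiset_sum, ← AddMonoidHom.mem_ker, QuotientAddGroup.ker_mk']

theorem SumIrreducible.map_val_add (hN : ∀ x ∈ N, ¬IsAddUnit x)
    (hstab : ∀ x, N.sum + x = N.sum → IsAddUnit x)
    (hU : SumIrreducible
      (U.map (QuotientAddGroup.mk' (AddAction.stabilizer (AddUnits M) N.sum)))) :
    SumIrreducible (U.map AddUnits.val + N) := by
  intro B hB hsum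
  obtain ⟨R, hR⟩ := Multiset.le_iff_exists_add.mp hB
  have hRsum : N.sum + R.sum = N.sum := by
    have hUNR : (U.sum : M) + (N.sum + R.sum) = U.sum + N.sum := by
      rw [← add_assoc, ← sum_map_addUnits_val, ← sum_add, ← hsum, ← sum_add, ← hR, hsum]
    exact (AddUnits.add_right_inj _).mp hUNR
  have hRle : R ≤ U.map AddUnits.val := le_of_forall_isAddUnit_of_le_add hN
    (fun x hx => isAddUnit_of_isAddUnit_sum (hstab _ hRsum) hx)
    (hR ▸ Multiset.le_add_left R B)
  obtain ⟨V, hVU, rfl⟩ := exists_le_map_eq hRle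
  obtain ⟨W, rfl⟩ := Multiset.le_iff_exists_add.mp hVU
  rw [sum_map_addUnits_val] at hRsum
  have hVsum := (sum_map_mk_eq_zero_iff _).mpr (mem_stabilizer_addUnits.mpr hRsum)
  have hWV := hU (W.map _) (map_le_map (Multiset.le_add_left W V)) (by
    rw [Multiset.map_add, sum_add, hVsum, zero_add])
  rw [Multiset.map_add, right_eq_add, Multiset.map_eq_zero] at hWV
  rw [hR, hWV, Multiset.map_zero, add_zero]

theorem exists_le_card_eq_sum_mem_stabilizer [Finite (AddUnits M)] {d κ : ℕ}
    (hd : ∀ V : Multiset M, SumIrreducible V → card V ≤ d) (hκ : Nat.card (AddUnits M) ≤ κ)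
    (hexp : AddMonoid.exponent (AddUnits M) ∣ κ) (hN : ∀ x ∈ N, ¬IsAddUnit x)
    (hstab : ∀ x, N.sum + x = N.sum → IsAddUnit x) (hUN : d + κ ≤ card U + card N) :
    ∃ A ≤ U, card A = κ ∧ A.sum ∈ AddAction.stabilizer (AddUnits M) N.sum := by
  set H := AddAction.stabilizer (AddUnits M) N.sum
  have hsurj : Function.Surjective (QuotientAddGroup.mk' H) := QuotientAddGroup.mk'_surjective H
  have hquot (V : Multiset (AddUnits M ⧸ H)) (hV : SumIrreducible V) : card V + card N ≤ d := by
    obtain ⟨V', rfl⟩ := Multiset.map_surjective_of_surjective hsurj V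
    simpa using hd _ (hV.map_val_add hN hstab)
  have hNd : card N ≤ d := by simpa using hquot 0 sumIrreducible_zero
  obtain ⟨B, hB, hBcard, hBsum⟩ := exists_le_card_eq_sum_eq_zero (d := d - card N)
    (fun V hV => Nat.le_sub_of_add_le (hquot V hV))
    ((Nat.card_le_card_of_surjective _ hsurj).trans hκ)
    ((AddMonoidHom.exponent_dvd hsurj).trans hexp)
    (T := U.map (QuotientAddGroup.mk' H)) (by rw [card_map]; omega)
  obtain ⟨A, hA, rfl⟩ := exists_le_map_eq hB
  exact ⟨A, hA, by simpa using hBcard, (sum_map_mk_eq_zero_iff H).mp hBsum⟩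

end Stabilizer

section UnitOrNil

variable {M : Type*} [AddCommMonoid M] {z : M} {d κ : ℕ}

theorem exists_le_card_add_eq_sum_eq_of_absorbing (hz : ∀ a, z + a = z)
    (hd : ∀ V : Multiset M, SumIrreducible V → card V ≤ d) {T : Multiset M} (hTz : T.sum = z)
    (hT : d + κ ≤ card T) : ∃ B ≤ T, card B + κ = card T ∧ B.sum = T.sum := by
  obtain ⟨A, hAT, hAsum, hA⟩ := exists_sumIrreducible_le T
  have hAd := hd A hA
  obtain ⟨B, hAB, hBT, hB⟩ := exists_between_card_eq hAT (k := card T - κ) (by omega) (by omega)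
  obtain ⟨R, rfl⟩ := Multiset.le_iff_exists_add.mp hAB
  exact ⟨A + R, hBT, by omega, by rw [sum_add, hAsum, hTz, hz]⟩

theorem exists_le_card_add_eq_sum_eq [Finite (AddUnits M)] (hz : ∀ a, z + a = z)
    (hnil : ∀ x : M, IsAddUnit x ∨ ∃ n : ℕ, n • x = z)
    (hd : ∀ V : Multiset M, SumIrreducible V → card V ≤ d) (hκ : Nat.card (AddUnits M) ≤ κ)
    (hexp : AddMonoid.exponent (AddUnits M) ∣ κ) {T : Multiset M} (hT : d + κ ≤ card T) :
    ∃ B ≤ T, card B + κ = card T ∧ B.sum = T.sum := by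
  by_cases hTz : T.sum = z
  · exact exists_le_card_add_eq_sum_eq_of_absorbing hz hd hTz hT
  obtain ⟨U, N, hN, rfl⟩ := exists_eq_map_addUnits_val_add T
  have hNz : N.sum ≠ z := fun h => hTz (by rw [sum_add, h, add_comm, hz])
  obtain ⟨A, hA, hAcard, hAsum⟩ := exists_le_card_eq_sum_mem_stabilizer hd hκ hexp hN
    (fun _ => isAddUnit_of_add_eq_left hz hnil hNz) (by simpa using hT)
  obtain ⟨V, rfl⟩ := Multiset.le_iff_exists_add.mp hA
  refine ⟨V.map AddUnits.val + N, ?_, ?_, ?_⟩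
  · gcongr
    exact Multiset.le_add_left V A
  · simp only [card_add, card_map, hAcard]
    omega
  · rw [mem_stabilizer_addUnits] at hAsum
    simp only [Multiset.map_add, sum_add, sum_map_addUnits_val A]
    nth_rw 1 [← hAsum]
    abel

end UnitOrNil

section Invariants

variable {M : Type} [AddCommMonoid M]

theorem lift_id_mSum (T : Multiset M) : WithZero.lift (AddHom.id M) (mSum T) = T.sum := by
  simp [mSum, map_multiset_sum, Multiset.map_map, Function.comp_def]

theorem mSum_eq_coe_sum {T : Multiset M} (hT : T ≠ 0) : mSum T = (T.sum : M) := by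
  induction T using Multiset.induction with
  | empty => exact absurd rfl hT
  | cons a T ih =>
    have hcons : mSum (a ::ₘ T) = a + mSum T := by simp [mSum]
    rcases eq_or_ne T 0 with rfl | hT0
    · simp [mSum]
    · rw [hcons, ih hT0, sum_cons, WithZero.coe_add]

theorem eqSum_iff_sum_eq {A B : Multiset M} : EqSum A B ↔ A.sum = B.sum := by
  constructor
  · rintro (h | ⟨e, he, h⟩)
    · rw [← lift_id_mSum A, h, lift_id_mSum]
    · obtain rfl : e = 0 := by simpa using he 0
      rw [← lift_id_mSum A, ← lift_id_mSum B]
      rcases h with ⟨hA, hB⟩ | ⟨hA, hB⟩ <;> rw [hA, hB] <;> simp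
  · intro h
    by_cases hA : A = 0 <;> by_cases hB : B = 0
    · exact Or.inl (by rw [hA, hB])
    · subst hA
      exact Or.inr ⟨0, zero_add, Or.inl ⟨rfl, by rw [mSum_eq_coe_sum hB, ← h, sum_zero]⟩⟩
    · subst hB
      exact Or.inr ⟨0, zero_add, Or.inr ⟨by rw [mSum_eq_coe_sum hA, h, sum_zero], rfl⟩⟩
    · exact Or.inl (by rw [mSum_eq_coe_sum hA, mSum_eq_coe_sum hB, h])

theorem not_reducible_iff_sumIrreducible {T : Multiset M} : ¬Reducible T ↔ SumIrreducible T := by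
  simp only [Reducible, SumIrreducible, eqSum_iff_sum_eq, lt_iff_le_and_ne]
  grind

theorem rep_eq_nsmul (a : M) (n : ℕ) : rep a n = (n + 1) • a := by
  induction n with
  | zero => simp [rep]
  | succ n ih => rw [rep, ih, succ_nsmul _ (n + 1)]

theorem SumIrreducible.card_lt_davC [Finite M] {T : Multiset M} (hT : SumIrreducible T) :
    card T < DavC M := by
  have hne : {ℓ : ℕ | ∀ T : Multiset M, ℓ ≤ card T → Reducible T}.Nonempty :=
    ⟨Nat.card M, fun V hV => not_not.mp fun h =>
      (not_reducible_iff_sumIrreducible.mp h).card_lt_natCard.not_ge hV⟩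
  by_contra! hle
  exact not_reducible_iff_sumIrreducible.mpr hT (Nat.sInf_mem hne T hle)

theorem period_spec [Finite M] (a : M) :
    0 < period a ∧ ∃ k, rep a (k + period a) = rep a k := by
  obtain ⟨m, n, hmn, heq⟩ :=
    Set.finite_univ.exists_lt_map_eq_of_forall_mem (f := rep a) fun _ => Set.mem_univ _
  exact Nat.sInf_mem (s := {t | 0 < t ∧ ∃ k, rep a (k + t) = rep a k})
    ⟨n - m, Nat.sub_pos_of_lt hmn, m, by rw [Nat.add_sub_cancel' hmn.le, heq]⟩

theorem period_nsmul_addUnit [Finite M] (u : AddUnits M) : period (u : M) • u = 0 := by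
  obtain ⟨k, hk⟩ := (period_spec (u : M)).2
  rw [rep_eq_nsmul, rep_eq_nsmul, ← AddUnits.val_nsmul_eq_nsmul_val,
    ← AddUnits.val_nsmul_eq_nsmul_val, AddUnits.val_inj, add_right_comm, add_nsmul] at hk
  simpa using hk

variable [Fintype M]

theorem expS_pos : 0 < expS M := by
  rw [Nat.pos_iff_ne_zero, expS, Ne, Finset.lcm_eq_zero_iff]
  rintro ⟨a, -, ha⟩
  exact (period_spec a).1.ne' ha

theorem card_le_kappa : Fintype.card M ≤ kappa M := by
  have hpos := expS_pos (M := M)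
  have hlt : Fintype.card M + expS M - 1 < kappa M + expS M := Nat.lt_div_mul_add hpos
  omega

theorem exponent_addUnits_dvd_kappa : AddMonoid.exponent (AddUnits M) ∣ kappa M := by
  refine AddMonoid.exponent_dvd_of_forall_nsmul_eq_zero fun u => ?_
  have hdvd : period (u : M) ∣ kappa M :=
    (Finset.dvd_lcm (Finset.mem_univ (u : M))).trans (Dvd.intro_left _ rfl)
  obtain ⟨c, hc⟩ := hdvd
  rw [hc, mul_nsmul, period_nsmul_addUnit, nsmul_zero]

theorem EC_le_of_isAddUnit_or_nsmul_eq {z : M} (hz : ∀ a, z + a = z)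
    (hnil : ∀ x : M, IsAddUnit x ∨ ∃ n : ℕ, n • x = z) : EC M ≤ DavC M + kappa M - 1 := by
  have hD : 0 < DavC M := (sumIrreducible_zero (M := M)).card_lt_davC
  have : Finite (AddUnits M) := .of_injective AddUnits.val AddUnits.val_injective
  have hκ : Nat.card (AddUnits M) ≤ kappa M :=
    (Nat.card_le_card_of_injective AddUnits.val AddUnits.val_injective).trans
      (Nat.card_eq_fintype_card.trans_le card_le_kappa)
  have hκ_pos : 0 < kappa M := Nat.card_pos.trans_le hκ
  refine Nat.sInf_le ⟨by omega, fun T hT => ?_⟩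
  obtain ⟨B, hBT, hcard, hsum⟩ := exists_le_card_add_eq_sum_eq hz hnil
    (fun V hV => Nat.le_sub_one_of_lt hV.card_lt_davC) hκ exponent_addUnits_dvd_kappa
    (T := T) (by omega)
  exact ⟨B, hBT, by omega, eqSum_iff_sum_eq.mpr hsum⟩

end Invariants

end EGZ

/-- For a finite elementary semigroup `S = G ∪ N`,
`E(S) ≤ D(S) + κ(S) − 1`. -/
theorem E_le_of_elementary (S : Type) [AddCommSemigroup S] [Fintype S]
    (G N : Set S) (hel : IsElementary S G N) :
    EGZ.EC S ≤ EGZ.DavC S + EGZ.kappa S - 1 := by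
  obtain ⟨hGN, -, -, ⟨e, -, he, hinv⟩, -, ⟨z, -, hz, hnil⟩⟩ := hel
  let : Zero S := ⟨e⟩
  let : AddCommMonoid S :=
    { ‹AddCommSemigroup S› with
      zero_add := he
      add_zero := fun a => (add_comm a e).trans (he a)
      nsmul := nsmulRec }
  refine EGZ.EC_le_of_isAddUnit_or_nsmul_eq (M := S) hz fun x => ?_
  rcases hGN x with hx | hx
  · obtain ⟨b, -, hb⟩ := hinv x hx
    exact Or.inl (IsAddUnit.of_add_eq_zero b hb)
  · obtain ⟨n, hn⟩ := hnil x hx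
    exact Or.inr ⟨n + 1, by rw [← EGZ.rep_eq_nsmul, hn]⟩
end
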